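/- Let n, r and t be positive integers with n ≥ r and t ≥ 2, and let G be the disjoint union of n copies of the complete graph K_t. Then G is r-EKR, and G is strictly r-EKR unless r = n and t = 2. -/

import Mathlib

open Finset SimpleGraph
open scoped Classical

variable {V : Type*}

/-- The finset of independent sets of a finite graph `G`. -/
noncomputable def indepSets [Fintype V] (G : SimpleGraph V) : Finset (Finset V) :=
  univ.filter fun A => ∀ x ∈ A, ∀ y ∈ A, ¬ G.Adj x y

/-- The finset of independent sets of size `r` of `G`, i.e. `I^(r)(G)`. -/
noncomputable def indepSetsSize [Fintype V] (G : SimpleGraph V) (r : ℕ) : Finset (Finset V) :=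
  (indepSets G).filter fun A => A.card = r

/-- The `r`-star centred at `v`: independent sets of size `r` containing `v`. -/
noncomputable def ekrStar [Fintype V] (G : SimpleGraph V) (r : ℕ) (v : V) : Finset (Finset V) :=
  (indepSetsSize G r).filter fun A => v ∈ A

/-- A family of sets is pairwise intersecting. -/
def PairwiseIntersecting (𝒜 : Finset (Finset V)) : Prop :=
  ∀ A ∈ 𝒜, ∀ B ∈ 𝒜, (A ∩ B).Nonempty

/-- `G` is `r`-EKR: no pairwise intersecting subfamily of `I^(r)(G)` is larger than the
largest `r`-star. -/
def IsEKR [Fintype V] (G : SimpleGraph V) (r : ℕ) : Prop :=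
  ∀ 𝒜 ⊆ indepSetsSize G r, PairwiseIntersecting 𝒜 → ∃ v, 𝒜.card ≤ (ekrStar G r v).card

/-- `G` is strictly `r`-EKR: `r`-EKR, and every maximum-size pairwise intersecting
subfamily of `I^(r)(G)` is an `r`-star. -/
def IsStrictEKR [Fintype V] (G : SimpleGraph V) (r : ℕ) : Prop :=
  IsEKR G r ∧ ∀ 𝒜 ⊆ indepSetsSize G r, PairwiseIntersecting 𝒜 →
    (∀ ℬ ⊆ indepSetsSize G r, PairwiseIntersecting ℬ → ℬ.card ≤ 𝒜.card) →
    ∃ v, 𝒜 = ekrStar G r v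

/-- The disjoint union of `m` copies of the graph `H`. -/
def copies (m : ℕ) {W : Type*} (H : SimpleGraph W) : SimpleGraph (Fin m × W) where
  Adj := fun x y => x.1 = y.1 ∧ H.Adj x.2 y.2
  symm := ⟨fun _ _ h => ⟨h.1.symm, h.2.symm⟩⟩
  loopless := ⟨fun x h => H.loopless.irrefl x.2 h.2⟩

/-!
Katona's cycle method. Order the `n * t` vertices cyclically so that the copies of `K_t` also follow
each other cyclically; the `r`-arcs of such an ordering are then independent sets, at most `r` of
them belong to a given intersecting family, and exactly `r` belong to a star. The automorphism
group of the graph acts transitively on independent `r`-sets, so averaging over its images of one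
ordering gives the bound.

In a maximum family every ordering attains the bound `r`, and if `2 * r < n * t` the `r` arcs are
those through one vertex, the pivot `v`. Let `D` be a member avoiding `v`. Rearranging the ordering
so that `D` comes first among the vertices before `v` and is avoided after `v` produces an arc
through `v` disjoint from `D`, unless the ordering wraps around into `D`. This determines `D`
uniquely, and as at least two sets of the star at `v` are disjoint from `D`, the family is then
smaller than that star.
-/

theorem pairwiseIntersecting_iff_not_disjoint {𝒜 : Finset (Finset V)} :
    PairwiseIntersecting 𝒜 ↔ ∀ A ∈ 𝒜, ∀ B ∈ 𝒜, ¬Disjoint A B := by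
  simp only [PairwiseIntersecting, not_disjoint_iff_nonempty_inter]

section Star

variable [Fintype V] {G : SimpleGraph V} {r : ℕ} {v : V}

theorem mem_ekrStar {A : Finset V} : A ∈ ekrStar G r v ↔ A ∈ indepSetsSize G r ∧ v ∈ A := by
  simp only [ekrStar, mem_filter]

theorem ekrStar_subset : ekrStar G r v ⊆ indepSetsSize G r :=
  filter_subset ..

theorem pairwiseIntersecting_ekrStar : PairwiseIntersecting (ekrStar G r v) :=
  pairwiseIntersecting_iff_not_disjoint.mpr fun _ hA _ hB =>
    not_disjoint_iff.mpr ⟨v, (mem_ekrStar.mp hA).2, (mem_ekrStar.mp hB).2⟩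

end Star

section Averaging

variable {Γ Ω ι : Type*} [Group Γ] [MulAction Γ Ω] [DecidableEq Ω]

theorem card_filter_smul_eq [Fintype Γ] {a b : Ω} (hb : b ∈ MulAction.orbit Γ a) :
    #{g : Γ | g • a = b} = Nat.card (MulAction.stabilizer Γ a) := by
  obtain ⟨h, rfl⟩ := hb
  have hcoset (g : Γ) : g • a = h • a ↔ h⁻¹ * g ∈ MulAction.stabilizer Γ a := by
    rw [MulAction.mem_stabilizer_iff, mul_smul, inv_smul_eq_iff]
  rw [← Fintype.card_subtype, ← Nat.card_eq_fintype_card]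
  exact Nat.card_congr ((Equiv.mulLeft h⁻¹).subtypeEquiv hcoset)

theorem card_filter_smul_mem [Fintype Γ] {𝒜 : Finset Ω} {a : Ω}
    (h𝒜 : ∀ b ∈ 𝒜, b ∈ MulAction.orbit Γ a) :
    #{g : Γ | g • a ∈ 𝒜} = #𝒜 * Nat.card (MulAction.stabilizer Γ a) := by
  rw [card_eq_sum_card_fiberwise (f := fun g : Γ => g • a) (t := 𝒜) (by simp [Set.MapsTo]),
    ← smul_eq_mul, ← sum_const]
  refine sum_congr rfl fun b hb => ?_
  rw [← card_filter_smul_eq (h𝒜 b hb), filter_filter]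
  congr 1
  ext g
  simp only [mem_filter, mem_univ, true_and, and_iff_right_iff_imp]
  rintro rfl
  exact hb

variable {K : Finset ι} {w : ι → Ω} {𝒜 𝒮 : Finset Ω}

theorem sum_card_filter_smul_mem [Fintype Γ]
    (h𝒜 : ∀ k ∈ K, ∀ b ∈ 𝒜, b ∈ MulAction.orbit Γ (w k)) :
    ∑ g : Γ, #{k ∈ K | g • w k ∈ 𝒜} =
      #𝒜 * ∑ k ∈ K, Nat.card (MulAction.stabilizer Γ (w k)) :=
  calc ∑ g : Γ, #{k ∈ K | g • w k ∈ 𝒜}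
    _ = ∑ k ∈ K, #{g : Γ | g • w k ∈ 𝒜} :=
      sum_card_bipartiteAbove_eq_sum_card_bipartiteBelow fun g k => g • w k ∈ 𝒜
    _ = ∑ k ∈ K, #𝒜 * Nat.card (MulAction.stabilizer Γ (w k)) :=
      sum_congr rfl fun k hk => card_filter_smul_mem (h𝒜 k hk)
    _ = _ := (mul_sum ..).symm

theorem card_le_card_of_forall_card_filter_smul_le [Finite Γ] (hK : K.Nonempty)
    (h𝒜 : ∀ k ∈ K, ∀ b ∈ 𝒜, b ∈ MulAction.orbit Γ (w k))
    (h𝒮 : ∀ k ∈ K, ∀ b ∈ 𝒮, b ∈ MulAction.orbit Γ (w k))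
    (hle : ∀ g : Γ, #{k ∈ K | g • w k ∈ 𝒜} ≤ #{k ∈ K | g • w k ∈ 𝒮}) : #𝒜 ≤ #𝒮 := by
  have := Fintype.ofFinite Γ
  have hsum := sum_le_sum fun g (_ : g ∈ (univ : Finset Γ)) => hle g
  rw [sum_card_filter_smul_mem h𝒜, sum_card_filter_smul_mem h𝒮] at hsum
  exact Nat.le_of_mul_le_mul_right hsum (sum_pos (fun _ _ => Nat.card_pos) hK)

theorem card_filter_smul_eq_of_card_le [Finite Γ]
    (h𝒜 : ∀ k ∈ K, ∀ b ∈ 𝒜, b ∈ MulAction.orbit Γ (w k))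
    (h𝒮 : ∀ k ∈ K, ∀ b ∈ 𝒮, b ∈ MulAction.orbit Γ (w k))
    (hle : ∀ g : Γ, #{k ∈ K | g • w k ∈ 𝒜} ≤ #{k ∈ K | g • w k ∈ 𝒮}) (hcard : #𝒮 ≤ #𝒜)
    (g : Γ) : #{k ∈ K | g • w k ∈ 𝒜} = #{k ∈ K | g • w k ∈ 𝒮} := by
  have := Fintype.ofFinite Γ
  refine (sum_eq_sum_iff_of_le fun g _ => hle g).mp (le_antisymm ?_ ?_) g (mem_univ g)
  · exact sum_le_sum fun g _ => hle g
  · rw [sum_card_filter_smul_mem h𝒜, sum_card_filter_smul_mem h𝒮]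
    exact Nat.mul_le_mul_right _ hcard

end Averaging

section Arcs

/-- `T` is the set of starting points of a pairwise intersecting family of arcs of length `r` in a
cycle of length `m`, encoded as an `m`-periodic predicate on `ℤ`. Two such arcs whose starting
points differ by `d` are disjoint exactly when `r ≤ d ≤ m - r`. -/
structure IsIntersectingArcs (T : ℤ → Prop) (m r : ℕ) : Prop where
  periodic : Function.Periodic T m
  not_add : ∀ k d : ℤ, r ≤ d → d + r ≤ m → T k → ¬T (k + d)

theorem card_filter_Ico_eq_of_periodic {T : ℤ → Prop} [DecidablePred T] {m : ℕ}
    (hT : Function.Periodic T m) (a : ℤ) :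
    #{k ∈ Ico 0 (m : ℤ) | T k} = #{k ∈ Ico a (a + m) | T k} := by
  have hinj : Set.InjOn (fun k : ℤ => k % m) (Ico a (a + m)) := by
    rw [← card_image_iff, Int.image_Ico_emod a m (by positivity)]
    simp
  have hmod (k : ℤ) : T (k % m) ↔ T k := by
    rw [Int.emod_def, mul_comm, ← hT.int_mul (k / m) (k - _), Int.cast_id, sub_add_cancel]
  rw [← Int.image_Ico_emod a m (by positivity), filter_image,
    card_image_of_injOn (hinj.mono (coe_subset.mpr (filter_subset ..)))]
  simp only [hmod]

namespace IsIntersectingArcs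

variable {T : ℤ → Prop} [DecidablePred T] {m r : ℕ}

-- Of the starting points `y` and `y - r` at most one is occupied, and an arc meeting the one
-- starting at `k₀` starts in `(k₀ - r, k₀ + r)`.
theorem card_eq_card_filter (hT : IsIntersectingArcs T m r) (hm : 2 * r ≤ m) {k₀ : ℤ}
    (hk₀ : T k₀) :
    #{k ∈ Ico 0 (m : ℤ) | T k} = #{y ∈ Ico k₀ (k₀ + r) | T y ∨ T (y - r)} := by
  rw [card_filter_Ico_eq_of_periodic hT.periodic (k₀ - r)]
  have hnear {k : ℤ} (hk : k ∈ Ico (k₀ - r) (k₀ - r + m)) (hTk : T k) : k < k₀ + r := by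
    by_contra! hfar
    rw [mem_Ico] at hk
    exact hT.not_add k₀ (k - k₀) (by lia) (by lia) hk₀ (by rwa [add_sub_cancel])
  have hpair {k : ℤ} (hTk : T k) : ¬T (k + r) := hT.not_add k r le_rfl (by lia) hTk
  refine card_nbij (fun k => if k < k₀ then k + r else k) ?_ ?_ ?_
  · intro k hk
    simp only [mem_coe, mem_filter, mem_Ico] at hk ⊢
    have := hnear (mem_Ico.mpr hk.1) hk.2
    split_ifs <;> simp_all
  · intro x hx y hy hxy
    grind
  · intro y hy
    simp only [mem_coe, mem_filter, mem_Ico] at hy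
    rcases hy.2 with hTy | hTy
    · refine ⟨y, ?_, if_neg (by lia)⟩
      rw [mem_coe, mem_filter, mem_Ico]
      exact ⟨by lia, hTy⟩
    · refine ⟨y - r, ?_, (if_pos (by lia)).trans (sub_add_cancel y _)⟩
      rw [mem_coe, mem_filter, mem_Ico]
      exact ⟨by lia, hTy⟩

theorem card_le (hT : IsIntersectingArcs T m r) (hm : 2 * r ≤ m) :
    #{k ∈ Ico 0 (m : ℤ) | T k} ≤ r := by
  by_cases hne : ∃ k₀, T k₀
  · obtain ⟨k₀, hk₀⟩ := hne
    rw [hT.card_eq_card_filter hm hk₀]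
    exact (card_filter_le ..).trans (by simp)
  · simp [not_exists.mp hne]

theorem mem_or_sub_mem (hT : IsIntersectingArcs T m r) (hm : 2 * r ≤ m)
    (hcard : #{k ∈ Ico 0 (m : ℤ) | T k} = r) {k₀ y : ℤ} (hk₀ : T k₀)
    (hy : y ∈ Ico k₀ (k₀ + r)) : T y ∨ T (y - r) := by
  rw [hT.card_eq_card_filter hm hk₀] at hcard
  exact card_filter_eq_iff.mp (hcard.trans (by simp)) y hy

theorem mem_of_notMem_of_mem_succ (hT : IsIntersectingArcs T m r) (hm : 2 * r < m)
    (hcard : #{k ∈ Ico 0 (m : ℤ) | T k} = r) {k : ℤ} (hk : ¬T k) (hk' : T (k + 1)) {j : ℤ}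
    (hj : 1 ≤ j) (hjr : j ≤ r) : T (k + j) := by
  have hlast : T (k + r) := by
    simpa [hk] using hT.mem_or_sub_mem hm.le hcard hk' (y := k + r) (mem_Ico.mpr (by lia))
  induction j, hjr using Int.leInductionDown with
  | base => exact hlast
  | pred j hjr ih =>
    have hnot : ¬T (k + (j - 1) - r) := fun hTk =>
      hT.not_add _ (r + 1) (by lia) (by lia) hTk (by convert ih (by lia) using 1; ring)
    exact (hT.mem_or_sub_mem hm.le hcard hk' (mem_Ico.mpr (by lia))).resolve_right hnot

theorem exists_notMem_and_mem_succ (hT : IsIntersectingArcs T m r) (hr : 0 < r)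
    (hm : 2 * r ≤ m) (hcard : #{k ∈ Ico 0 (m : ℤ) | T k} = r) : ∃ k, ¬T k ∧ T (k + 1) := by
  obtain ⟨k₀, hk₀⟩ : ∃ k₀, T k₀ := by
    by_contra! hnone
    simp [hnone, hr.ne] at hcard
  by_contra! hall
  have hdown (k : ℤ) (hk : k ≤ k₀) : T k := by
    induction k, hk using Int.leInductionDown with
    | base => exact hk₀
    | pred k _ ih => exact by_contra fun hk => hall _ hk (by simpa using ih)
  exact hT.not_add (k₀ - r) r le_rfl (by lia) (hdown _ (by lia)) (by simpa using hk₀)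

end IsIntersectingArcs

end Arcs

section CompleteGraphs

open scoped Pointwise

theorem exists_perm_apply_eq {α ι : Type*} [Finite α] {s : Finset ι} {p q : ι → α}
    (h : ∀ i ∈ s, ∀ j ∈ s, p i = p j ↔ q i = q j) :
    ∃ σ : Equiv.Perm α, ∀ i ∈ s, σ (p i) = q i := by
  have := Fintype.ofFinite α
  set f : α → α := Function.extend (fun i : s => p i) (fun i : s => q i) id
  have hf (i : ι) (hi : i ∈ s) : f (p i) = q i :=
    Function.FactorsThrough.extend_apply (f := fun i : s => p i) (g := fun i : s => q i)
      (fun i j => (h i i.2 j j.2).mp) id ⟨i, hi⟩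
  have hinj : Set.InjOn f (s.image p) := by
    simp only [coe_image, Set.InjOn, Set.forall_mem_image, mem_coe]
    intro i hi j hj hij
    rwa [hf i hi, hf j hj, ← h i hi j hj] at hij
  obtain ⟨σ, hσ⟩ := exists_equiv_extend_of_card_eq (card_univ (α := α)).symm (subset_univ _) hinj
  refine ⟨σ.trans (Equiv.subtypeUnivEquiv mem_univ), fun i hi => ?_⟩
  simpa [hf i hi] using hσ (p i) (mem_image_of_mem p hi)

variable {n : ℕ} {W : Type*}

theorem fst_eq_iff_copies_adj_or_eq {x y : Fin n × W} :
    x.1 = y.1 ↔ (copies n (⊤ : SimpleGraph W)).Adj x y ∨ x = y := by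
  simp only [copies, top_adj, Prod.ext_iff]
  tauto

theorem fst_copies_top_iso_apply_eq_iff
    (g : copies n (⊤ : SimpleGraph W) ≃g copies n (⊤ : SimpleGraph W)) {x y : Fin n × W} :
    (g x).1 = (g y).1 ↔ x.1 = y.1 := by
  simp only [fst_eq_iff_copies_adj_or_eq, g.map_adj_iff, g.injective.eq_iff]

theorem exists_copies_top_iso_apply_eq {ι : Type*} [Finite W] {s : Finset ι} {p q : ι → Fin n × W}
    (hfst : ∀ i ∈ s, ∀ j ∈ s, (p i).1 = (p j).1 ↔ (q i).1 = (q j).1)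
    (heq : ∀ i ∈ s, ∀ j ∈ s, p i = p j ↔ q i = q j) :
    ∃ g : copies n (⊤ : SimpleGraph W) ≃g copies n (⊤ : SimpleGraph W),
      ∀ i ∈ s, g (p i) = q i := by
  obtain ⟨π, hπ⟩ := exists_perm_apply_eq hfst
  have hsnd (a : Fin n) : ∃ σ : Equiv.Perm W, ∀ i ∈ s.filter (fun i => (p i).1 = a),
      σ (p i).2 = (q i).2 := by
    refine exists_perm_apply_eq fun i hi j hj => ?_
    rw [mem_filter] at hi hj
    have hp : (p i).1 = (p j).1 := hi.2.trans hj.2.symm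
    simpa [Prod.ext_iff, hp, (hfst i hi.1 j hj.1).mp hp] using heq i hi.1 j hj.1
  choose σ hσ using hsnd
  refine ⟨⟨Equiv.prodShear π σ, ?_⟩, fun i hi => ?_⟩
  · rintro ⟨a, b⟩ ⟨a', b'⟩
    simp only [copies, top_adj, Equiv.prodShear_apply, π.apply_eq_iff_eq]
    refine and_congr_right fun haa' => ?_
    rw [haa', Ne, (σ a').apply_eq_iff_eq]
  · exact Prod.ext (hπ i hi) (hσ _ i (mem_filter.mpr ⟨hi, rfl⟩))

variable [Fintype W] {r : ℕ} {A B : Finset (Fin n × W)}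

theorem mem_indepSetsSize_copies_top :
    A ∈ indepSetsSize (copies n (⊤ : SimpleGraph W)) r ↔
      Set.InjOn Prod.fst (A : Set (Fin n × W)) ∧ #A = r := by
  simp only [indepSetsSize, indepSets, mem_filter, mem_univ, true_and]
  refine and_congr_left fun _ => forall₄_congr fun x _ y _ => ?_
  rw [fst_eq_iff_copies_adj_or_eq]
  have := (copies n (⊤ : SimpleGraph W)).ne_of_adj (a := x) (b := y)
  tauto

theorem mem_orbit_of_mem_indepSetsSize [DecidableEq W]
    (hA : A ∈ indepSetsSize (copies n (⊤ : SimpleGraph W)) r)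
    (hB : B ∈ indepSetsSize (copies n (⊤ : SimpleGraph W)) r) :
    B ∈ MulAction.orbit (copies n (⊤ : SimpleGraph W) ≃g copies n (⊤ : SimpleGraph W)) A := by
  rw [mem_indepSetsSize_copies_top] at hA hB
  let φ := equivOfCardEq (hA.2.trans hB.2.symm)
  obtain ⟨g, hg⟩ := exists_copies_top_iso_apply_eq (s := univ) (p := fun a : A => (a : Fin n × W))
    (q := fun a : A => (φ a : Fin n × W))
    (fun a _ b _ => by simp [hA.1.eq_iff a.2 b.2, hB.1.eq_iff (φ a).2 (φ b).2]) (by simp)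
  refine ⟨g, eq_of_subset_of_card_le (fun x hx => ?_) ?_⟩
  · obtain ⟨a, ha, rfl⟩ := mem_smul_finset.mp hx
    rw [RelIso.smul_def, hg ⟨a, ha⟩ (mem_univ _)]
    exact (φ ⟨a, ha⟩).2
  · simp [card_smul_finset, hA.2, hB.2]

end CompleteGraphs

section Arrangement

open scoped Pointwise

theorem modEq_iff_eq_of_abs_sub_lt {i j m : ℤ} (h : |i - j| < m) : i ≡ j [ZMOD m] ↔ i = j := by
  refine ⟨fun hij => ?_, fun hij => hij ▸ rfl⟩
  have := Int.eq_zero_of_abs_lt_dvd hij.dvd (by rwa [abs_sub_comm])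
  lia

theorem modEq_iff_of_abs_sub_lt_two_mul {i j m : ℤ} (h : |i - j| < 2 * m) :
    i ≡ j [ZMOD m] ↔ i = j ∨ i = j + m ∨ j = i + m := by
  constructor
  · intro hij
    obtain ⟨c, hc⟩ := hij.dvd
    have hm : 0 < m := by linarith [abs_nonneg (i - j)]
    have hc' : -2 < c ∧ c < 2 := by
      rw [abs_lt] at h
      constructor <;> nlinarith
    obtain rfl | rfl | rfl : c = -1 ∨ c = 0 ∨ c = 1 := by lia
    all_goals lia
  · rintro (rfl | rfl | rfl) <;> simp [Int.ModEq]

/-- A cyclic ordering of the vertices of `n` copies of `K_t`, unrolled to a sequence indexed by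
`ℤ` of period `n * t`, in which the copies also follow each other cyclically. -/
structure IsArrangement {n t : ℕ} (e : ℤ → Fin n × Fin t) : Prop where
  fst_eq_iff : ∀ i j, (e i).1 = (e j).1 ↔ i ≡ j [ZMOD n]
  eq_iff : ∀ i j, e i = e j ↔ i ≡ j [ZMOD (n * t : ℕ)]

/-- The arc of `r` consecutive vertices of the cyclic ordering `e` starting at position `k`. -/
noncomputable def window {X : Type*} [DecidableEq X] (e : ℤ → X) (r : ℕ) (k : ℤ) : Finset X :=
  (Ico k (k + r)).image e

theorem mem_window {X : Type*} [DecidableEq X] {e : ℤ → X} {r : ℕ} {k : ℤ} {x : X} :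
    x ∈ window e r k ↔ ∃ i, k ≤ i ∧ i < k + r ∧ e i = x := by
  simp [window, and_assoc]

theorem exists_isArrangement {n t : ℕ} (hn : 0 < n) (ht : 0 < t) :
    ∃ e : ℤ → Fin n × Fin t, IsArrangement e := by
  have hpos : (0 : ℤ) < (t * n : ℕ) := by positivity
  have hnonneg (i : ℤ) : 0 ≤ i % (t * n : ℕ) := Int.emod_nonneg i hpos.ne'
  let residue (i : ℤ) : Fin (t * n) :=
    ⟨(i % (t * n : ℕ)).toNat, by have := Int.emod_lt_of_pos i hpos; have := hnonneg i; lia⟩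
  refine ⟨fun i => (finProdFinEquiv.symm (residue i)).swap, fun i j => ?_, fun i j => ?_⟩
  · have hmod (i : ℤ) : ((residue i).modNat : ℤ) = i % n := by
      simp only [residue, Fin.coe_modNat, Int.natCast_emod, Int.toNat_of_nonneg (hnonneg i)]
      exact Int.emod_emod_of_dvd i (by simp)
    simp only [Prod.fst_swap, finProdFinEquiv_symm_apply, Fin.ext_iff, Int.ModEq, ← hmod,
      Nat.cast_inj]
  · rw [Prod.swap_inj, finProdFinEquiv.symm.apply_eq_iff_eq, Fin.ext_iff, mul_comm n t,
      Int.ModEq, ← Int.toNat_of_nonneg (hnonneg i), ← Int.toNat_of_nonneg (hnonneg j), Nat.cast_inj]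

namespace IsArrangement

variable {n t r : ℕ} {e : ℤ → Fin n × Fin t}

theorem comp_add (he : IsArrangement e) (k : ℤ) : IsArrangement fun i => e (i + k) where
  fst_eq_iff i j := by simp [he.fst_eq_iff, Int.modEq_iff_dvd]
  eq_iff i j := by simp [he.eq_iff, Int.modEq_iff_dvd]

theorem comp_sub (he : IsArrangement e) (c : ℤ) : IsArrangement fun i => e (c - i) where
  fst_eq_iff i j := by simp [he.fst_eq_iff, Int.modEq_iff_dvd, dvd_sub_comm]
  eq_iff i j := by simp [he.eq_iff, Int.modEq_iff_dvd, dvd_sub_comm]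

theorem iso_comp (he : IsArrangement e)
    (g : copies n (⊤ : SimpleGraph (Fin t)) ≃g copies n (⊤ : SimpleGraph (Fin t))) :
    IsArrangement (g ∘ e) where
  fst_eq_iff i j := (fst_copies_top_iso_apply_eq_iff g).trans (he.fst_eq_iff i j)
  eq_iff i j := g.injective.eq_iff.trans (he.eq_iff i j)

theorem exists_eq_comp_on (he : IsArrangement e) {s : Finset ℤ} {ρ : ℤ → ℤ}
    (hfst : ∀ i ∈ s, ∀ j ∈ s, i ≡ j [ZMOD n] ↔ ρ i ≡ ρ j [ZMOD n])
    (heq : ∀ i ∈ s, ∀ j ∈ s, i ≡ j [ZMOD (n * t : ℕ)] ↔ ρ i ≡ ρ j [ZMOD (n * t : ℕ)]) :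
    ∃ e' : ℤ → Fin n × Fin t, IsArrangement e' ∧ ∀ i ∈ s, e' i = e (ρ i) := by
  obtain ⟨g, hg⟩ := exists_copies_top_iso_apply_eq (s := s) (p := e) (q := e ∘ ρ)
    (by simpa only [Function.comp, he.fst_eq_iff] using hfst)
    (by simpa only [Function.comp, he.eq_iff] using heq)
  exact ⟨g ∘ e, he.iso_comp g, hg⟩

theorem injOn_fst (he : IsArrangement e) (k : ℤ) :
    Set.InjOn (fun i => (e i).1) (Set.Ico k (k + n)) := by
  intro i hi j hj hij
  rw [Set.mem_Ico] at hi hj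
  exact (modEq_iff_eq_of_abs_sub_lt (by rw [abs_lt]; lia)).mp ((he.fst_eq_iff i j).mp hij)

theorem injOn (he : IsArrangement e) (k : ℤ) : Set.InjOn e (Set.Ico k (k + (n * t : ℕ))) := by
  intro i hi j hj hij
  rw [Set.mem_Ico] at hi hj
  exact (modEq_iff_eq_of_abs_sub_lt (by rw [abs_lt]; lia)).mp ((he.eq_iff i j).mp hij)

theorem surjective (he : IsArrangement e) : Function.Surjective e := by
  have hcard : #((Ico (0 : ℤ) (0 + (n * t : ℕ))).image e) =
      Fintype.card (Fin n × Fin t) := by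
    rw [card_image_of_injOn (by simpa using he.injOn 0), Int.card_Ico]
    simp only [zero_add, sub_zero, Int.toNat_natCast, Fintype.card_prod, Fintype.card_fin]
  intro x
  have hx := mem_univ x
  rw [← eq_univ_of_card _ hcard] at hx
  obtain ⟨i, -, hi⟩ := mem_image.mp hx
  exact ⟨i, hi⟩

theorem window_mem_indepSetsSize (he : IsArrangement e) (hrn : r ≤ n) (k : ℤ) :
    window e r k ∈ indepSetsSize (copies n (⊤ : SimpleGraph (Fin t))) r := by
  have hinj : Set.InjOn (Prod.fst ∘ e) (Ico k (k + r) : Finset ℤ) :=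
    (he.injOn_fst k).mono fun i hi => by rw [mem_coe, mem_Ico] at hi; rw [Set.mem_Ico]; lia
  rw [mem_indepSetsSize_copies_top, window, card_image_of_injOn hinj.of_comp, coe_image]
  exact ⟨hinj.image_of_comp, by simp⟩

theorem disjoint_window (he : IsArrangement e) {k d : ℤ} (hd : r ≤ d) (hd' : d + r ≤ (n * t : ℕ)) :
    Disjoint (window e r k) (window e r (k + d)) := by
  simp only [Finset.disjoint_left, mem_window]
  rintro _ ⟨i, hi, hi', rfl⟩ ⟨j, hj, hj', hij⟩
  have := he.injOn k (by rw [Set.mem_Ico]; lia) (by rw [Set.mem_Ico]; lia) hij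
  lia

theorem window_periodic (he : IsArrangement e) : Function.Periodic (window e r) (n * t : ℕ) := by
  intro k
  have hperiod (i : ℤ) : e (i + (n * t : ℕ)) = e i := by simp [he.eq_iff, Int.ModEq]
  have hshift : Ico (k + (n * t : ℕ)) (k + (n * t : ℕ) + r) =
      (Ico k (k + r)).image (· + ((n * t : ℕ) : ℤ)) := by
    rw [image_add_right_Ico, add_right_comm]
  rw [window, window, hshift, image_image]
  exact image_congr fun i _ => hperiod i

theorem isIntersectingArcs (he : IsArrangement e) {𝒜 : Finset (Finset (Fin n × Fin t))}
    (h𝒜 : PairwiseIntersecting 𝒜) :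
    IsIntersectingArcs (fun k => window e r k ∈ 𝒜) (n * t) r where
  periodic k := by simp only [he.window_periodic k]
  not_add _ _ hd hd' hk hkd :=
    pairwiseIntersecting_iff_not_disjoint.mp h𝒜 _ hk _ hkd (he.disjoint_window hd hd')

end IsArrangement

end Arrangement

section Katona

open scoped Pointwise

variable {n r t : ℕ} {𝒜 : Finset (Finset (Fin n × Fin t))} {e : ℤ → Fin n × Fin t}

local notation "K" => copies n (⊤ : SimpleGraph (Fin t))

theorem window_comp_eq_smul (e : ℤ → Fin n × Fin t) (g : K ≃g K) (k : ℤ) :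
    window (g ∘ e) r k = g • window e r k := by
  rw [window, window, ← image_image]
  rfl

namespace IsArrangement

theorem le_card_filter_window_mem_ekrStar (he : IsArrangement e) (hrn : r ≤ n)
    (v : Fin n × Fin t) : r ≤ #{k ∈ Ico 0 ((n * t : ℕ) : ℤ) | window e r k ∈ ekrStar K r v} := by
  obtain ⟨j, rfl⟩ := he.surjective v
  have hrm : r ≤ n * t := hrn.trans (Nat.le_mul_of_pos_right n (e j).2.pos)
  rw [card_filter_Ico_eq_of_periodic (fun k => by simp only [he.window_periodic k]) (j - r + 1)]
  calc r = #(Ico (j - r + 1) (j + 1)) := by simp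
    _ ≤ _ := card_le_card fun k hk => ?_
  rw [mem_Ico] at hk
  refine mem_filter.mpr ⟨mem_Ico.mpr (by lia), mem_ekrStar.mpr ⟨?_, ?_⟩⟩
  · exact he.window_mem_indepSetsSize hrn k
  · exact mem_window.mpr ⟨j, by lia, by lia, rfl⟩

theorem card_filter_smul_window_le (he : IsArrangement e) (h𝒜 : PairwiseIntersecting 𝒜)
    (hrn : r ≤ n) (hrm : 2 * r ≤ n * t) (v : Fin n × Fin t) (g : K ≃g K) :
    #{k ∈ Ico 0 ((n * t : ℕ) : ℤ) | g • window e r k ∈ 𝒜} ≤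
      #{k ∈ Ico 0 ((n * t : ℕ) : ℤ) | g • window e r k ∈ ekrStar K r v} := by
  simp only [← window_comp_eq_smul]
  exact (((he.iso_comp g).isIntersectingArcs h𝒜).card_le hrm).trans
    ((he.iso_comp g).le_card_filter_window_mem_ekrStar hrn v)

theorem mem_orbit_window (he : IsArrangement e) (hrn : r ≤ n)
    (h𝒜K : 𝒜 ⊆ indepSetsSize K r) (k : ℤ) :
    ∀ A ∈ 𝒜, A ∈ MulAction.orbit (K ≃g K) (window e r k) := fun _ hA =>
  mem_orbit_of_mem_indepSetsSize (he.window_mem_indepSetsSize hrn k) (h𝒜K hA)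

theorem card_filter_window_eq (he : IsArrangement e) (h𝒜K : 𝒜 ⊆ indepSetsSize K r)
    (h𝒜 : PairwiseIntersecting 𝒜) (hrn : r ≤ n) (hrm : 2 * r ≤ n * t) {v : Fin n × Fin t}
    (hcard : #(ekrStar K r v) ≤ #𝒜) :
    #{k ∈ Ico 0 ((n * t : ℕ) : ℤ) | window e r k ∈ 𝒜} = r := by
  have : Finite (K ≃g K) := DFunLike.finite _
  have heq := card_filter_smul_eq_of_card_le
    (fun k _ => he.mem_orbit_window hrn h𝒜K k)
    (fun k _ => he.mem_orbit_window hrn ekrStar_subset k)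
    (he.card_filter_smul_window_le h𝒜 hrn hrm v) hcard 1
  simp only [one_smul] at heq
  exact le_antisymm ((he.isIntersectingArcs h𝒜).card_le hrm)
    (heq ▸ he.le_card_filter_window_mem_ekrStar hrn v)

end IsArrangement

theorem card_le_card_ekrStar (h𝒜K : 𝒜 ⊆ indepSetsSize K r) (h𝒜 : PairwiseIntersecting 𝒜)
    (hrn : r ≤ n) (hrm : 2 * r ≤ n * t) (v : Fin n × Fin t) : #𝒜 ≤ #(ekrStar K r v) := by
  obtain ⟨e, he⟩ := exists_isArrangement v.1.pos v.2.pos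
  have : Finite (K ≃g K) := DFunLike.finite _
  have hnt : 0 < n * t := mul_pos v.1.pos v.2.pos
  exact card_le_card_of_forall_card_filter_smul_le (nonempty_Ico.mpr (by lia))
    (fun k _ => he.mem_orbit_window hrn h𝒜K k)
    (fun k _ => he.mem_orbit_window hrn ekrStar_subset k)
    (he.card_filter_smul_window_le h𝒜 hrn hrm v)

end Katona

section NearStar

variable {n r : ℕ} {W : Type*} [Fintype W] [Nontrivial W] {v x : Fin n × W}
  {D : Finset (Fin n × W)} {𝒜 : Finset (Finset (Fin n × W))}

local notation "K" => copies n (⊤ : SimpleGraph W)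

theorem exists_mem_ekrStar_disjoint (hD : D ∈ indepSetsSize K r) (hv : v.1 ∉ D.image Prod.fst)
    (hx : x ∈ D) : ∃ E ∈ ekrStar K r v, Disjoint E D ∧
      E.image Prod.fst = insert v.1 ((D.erase x).image Prod.fst) := by
  choose other hother using exists_ne (α := W)
  obtain ⟨hinj, hcard⟩ := mem_indepSetsSize_copies_top.mp hD
  set E := insert v ((D.erase x).image fun y => (y.1, other y.2))
  have himage : E.image Prod.fst = insert v.1 ((D.erase x).image Prod.fst) := by
    rw [image_insert, image_image]
    rfl
  have hinj' : Set.InjOn Prod.fst (D.erase x : Set (Fin n × W)) :=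
    hinj.mono (coe_subset.mpr (erase_subset x D))
  have hv' : v.1 ∉ (D.erase x).image Prod.fst :=
    fun h => hv (image_subset_image (erase_subset x D) h)
  have hcard_image : #(E.image Prod.fst) = r := by
    rw [himage, card_insert_of_notMem hv', card_image_of_injOn hinj', card_erase_add_one hx, hcard]
  have hcardE : #E = r := by
    refine le_antisymm ?_ (hcard_image ▸ card_image_le)
    rw [← hcard, ← card_erase_add_one hx]
    exact (card_insert_le ..).trans (Nat.add_le_add_right card_image_le 1)
  refine ⟨E, mem_ekrStar.mpr ⟨mem_indepSetsSize_copies_top.mpr ⟨?_, hcardE⟩, mem_insert_self ..⟩,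
    ?_, himage⟩
  · exact card_image_iff.mp (hcard_image.trans hcardE.symm)
  · rw [disjoint_insert_left, Finset.disjoint_left, forall_mem_image]
    refine ⟨fun hvD => hv (mem_image_of_mem _ hvD), fun y hy hyD => hother y.2 ?_⟩
    exact congrArg Prod.snd (hinj hyD (mem_of_mem_erase hy) rfl)

theorem one_lt_card_filter_disjoint_ekrStar (hD : D ∈ indepSetsSize K r)
    (hv : v.1 ∉ D.image Prod.fst) (hr : 1 < r) : 1 < #{E ∈ ekrStar K r v | Disjoint E D} := by
  obtain ⟨hinj, hcard⟩ := mem_indepSetsSize_copies_top.mp hD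
  obtain ⟨x, hx, y, hy, hxy⟩ := one_lt_card.mp (hcard.symm ▸ hr)
  obtain ⟨E, hE, hED, hEfst⟩ := exists_mem_ekrStar_disjoint hD hv hx
  obtain ⟨F, hF, hFD, hFfst⟩ := exists_mem_ekrStar_disjoint hD hv hy
  refine one_lt_card.mpr ⟨E, mem_filter.mpr ⟨hE, hED⟩, F, mem_filter.mpr ⟨hF, hFD⟩, ?_⟩
  rintro rfl
  have hmem : x.1 ∈ insert v.1 ((D.erase x).image Prod.fst) := by
    rw [← hEfst, hFfst]
    exact mem_insert_of_mem (mem_image_of_mem _ (mem_erase.mpr ⟨hxy, hx⟩))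
  rcases mem_insert.mp hmem with hxv | hxD
  · exact hv (hxv ▸ mem_image_of_mem _ hx)
  · obtain ⟨z, hz, hzx⟩ := mem_image.mp hxD
    exact ne_of_mem_erase hz (hinj (mem_of_mem_erase hz) hx hzx)

theorem card_lt_card_ekrStar_of_forall_ne_mem (h𝒜K : 𝒜 ⊆ indepSetsSize K r)
    (h𝒜 : PairwiseIntersecting 𝒜) (hD : D ∈ 𝒜) (hv : v.1 ∉ D.image Prod.fst) (hr : 1 < r)
    (hmem : ∀ A ∈ 𝒜, A ≠ D → v ∈ A) : #𝒜 < #(ekrStar K r v) := by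
  have hsub : 𝒜 ⊆ insert D {E ∈ ekrStar K r v | ¬Disjoint E D} := fun A hA => by
    rw [mem_insert, mem_filter, mem_ekrStar, or_iff_not_imp_left]
    exact fun hAD => ⟨⟨h𝒜K hA, hmem A hA hAD⟩,
      pairwiseIntersecting_iff_not_disjoint.mp h𝒜 A hA D hD⟩
  calc #𝒜 ≤ #{E ∈ ekrStar K r v | ¬Disjoint E D} + 1 :=
      (card_le_card hsub).trans (card_insert_le ..)
    _ < #{E ∈ ekrStar K r v | ¬Disjoint E D} + #{E ∈ ekrStar K r v | Disjoint E D} := by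
      gcongr
      exact one_lt_card_filter_disjoint_ekrStar (h𝒜K hD) hv hr
    _ = #(ekrStar K r v) := by rw [add_comm, card_filter_add_card_filter_not]

end NearStar

section Pivot

variable {n r t : ℕ} {𝒜 : Finset (Finset (Fin n × Fin t))} {D : Finset (Fin n × Fin t)}
  {e e' : ℤ → Fin n × Fin t}

local notation "K" => copies n (⊤ : SimpleGraph (Fin t))

theorem exists_perm_sorting (P : ℤ → Prop) {a b : ℤ} (hab : a ≤ b) :
    ∃ σ : Equiv.Perm ℤ, ∃ k ∈ Icc a b, (∀ i ∉ Ico a b, σ i = i) ∧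
      ∀ i ∈ Ico a b, P (σ i) ↔ i < k := by
  induction b, hab using Int.leInduction with
  | base => exact ⟨1, a, by simp⟩
  | succ b hab ih =>
    obtain ⟨σ, k, hk, hfix, hP⟩ := ih
    simp only [mem_Icc, mem_Ico] at hk hfix hP ⊢
    have : σ b = b := hfix b (by simp)
    by_cases hPb : P b
    · refine ⟨σ * Equiv.swap k b, k + 1, by lia, fun i hi => ?_, fun i hi => ?_⟩
      · rw [Equiv.Perm.mul_apply, Equiv.swap_apply_of_ne_of_ne (by lia) (by lia), hfix i (by lia)]
      · rw [Equiv.Perm.mul_apply, Equiv.swap_apply_def]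
        grind
    · exact ⟨σ, k, by lia, fun i hi => hfix i (by lia), by grind⟩

namespace IsArrangement

theorem exists_eq_comp_perm (he : IsArrangement e) (ht : 2 ≤ t) {σ : Equiv.Perm ℤ}
    (hσ : ∀ i ∉ Ioo (0 : ℤ) n, σ i = i) :
    ∃ e', IsArrangement e' ∧ ∀ i ∈ Icc (0 : ℤ) n, e' i = e (σ i) := by
  have hn : 0 < n := (e 0).1.pos
  have hnt : 2 * n ≤ n * t := by nlinarith
  have hσn_iff (i : ℤ) : σ i = n ↔ i = n := by
    rw [← σ.apply_eq_iff_eq (x := i), hσ n (by simp)]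
  have hσ0_iff (i : ℤ) : σ i = 0 ↔ i = 0 := by
    rw [← σ.apply_eq_iff_eq (x := i), hσ 0 (by simp)]
  have hσmem {i : ℤ} (hi : 0 ≤ i ∧ i ≤ n) : 0 ≤ σ i ∧ σ i ≤ n := by
    by_contra hout
    have hfix : σ (σ i) = σ i := hσ _ (by rw [mem_Ioo]; lia)
    exact hout (by rwa [σ.injective hfix])
  refine he.exists_eq_comp_on ?_ ?_ <;> intro i hi j hj <;> rw [mem_Icc] at hi hj <;>
    have hi' := hσmem hi <;> have hj' := hσmem hj
  · rw [modEq_iff_of_abs_sub_lt_two_mul (by rw [abs_lt]; lia),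
      modEq_iff_of_abs_sub_lt_two_mul (by rw [abs_lt]; lia)]
    have hwrap {i j : ℤ} (hi : i ≤ n) (hj : 0 ≤ j) : i = j + n ↔ i = n ∧ j = 0 := by lia
    rw [hwrap hi.2 hj.1, hwrap hj.2 hi.1, hwrap hi'.2 hj'.1, hwrap hj'.2 hi'.1]
    simp only [σ.apply_eq_iff_eq, hσn_iff, hσ0_iff]
  · rw [modEq_iff_eq_of_abs_sub_lt (by rw [abs_lt]; lia),
      modEq_iff_eq_of_abs_sub_lt (by rw [abs_lt]; lia), σ.apply_eq_iff_eq]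

theorem add_notMem_of_mem (he : IsArrangement e) (ht : 2 ≤ t)
    (hD : Set.InjOn Prod.fst (D : Set (Fin n × Fin t))) {i : ℤ} (hi : e i ∈ D) :
    e (i + n) ∉ D := by
  have hn : 0 < n := (e 0).1.pos
  have hnt : 2 * n ≤ n * t := by nlinarith
  intro hin
  have heq := hD hi hin ((he.fst_eq_iff _ _).mpr (by simp [Int.ModEq]))
  rw [he.eq_iff, modEq_iff_eq_of_abs_sub_lt (by rw [abs_lt]; lia)] at heq
  lia

theorem disjoint_window_of_sorted (he : IsArrangement e) (ht : 2 ≤ t)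
    (hD : Set.InjOn Prod.fst (D : Set (Fin n × Fin t))) (hrn : r ≤ n) {k : ℤ} (hk : 1 ≤ k)
    (hkn : k ≤ n) (hsorted : ∀ i ∈ Ico (1 : ℤ) n, e i ∈ D ↔ i < k)
    (hn : n < k + r → e n ∉ D) : Disjoint (window e r k) D := by
  simp only [Finset.disjoint_left, mem_window]
  rintro _ ⟨i, hki, hir, rfl⟩
  obtain hin | rfl | hin := lt_trichotomy i n
  · rw [hsorted i (mem_Ico.mpr (by lia))]
    lia
  · exact hn hir
  · have hwrapped : e (i - n) ∈ D := (hsorted _ (mem_Ico.mpr (by lia))).mpr (by lia)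
    simpa using he.add_notMem_of_mem ht hD hwrapped

end IsArrangement

/-- A pairwise intersecting family of independent `r`-sets attaining the bound `r` of Katona's
argument in every cyclic ordering. -/
structure IsTight (𝒜 : Finset (Finset (Fin n × Fin t))) (r : ℕ) : Prop where
  subset : 𝒜 ⊆ indepSetsSize K r
  pairwiseIntersecting : PairwiseIntersecting 𝒜
  card_filter_window : ∀ e : ℤ → Fin n × Fin t, IsArrangement e →
    #{k ∈ Ico 0 ((n * t : ℕ) : ℤ) | window e r k ∈ 𝒜} = r

/-- A cyclic ordering in which the windows of length `r` belonging to `𝒜` start to occur at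
position `1`. For a tight family they are those containing the pivot `e r`. -/
structure IsPivotal (𝒜 : Finset (Finset (Fin n × Fin t))) (r : ℕ) (e : ℤ → Fin n × Fin t) :
    Prop where
  isArrangement : IsArrangement e
  window_zero_notMem : window e r 0 ∉ 𝒜
  window_one_mem : window e r 1 ∈ 𝒜

theorem IsTight.exists_isPivotal (h𝒜 : IsTight 𝒜 r) (hr : 0 < r) (hrm : 2 * r ≤ n * t) :
    ∃ e, IsPivotal 𝒜 r e := by
  have hpos : 0 < n * t := by lia
  obtain ⟨e, he⟩ := exists_isArrangement (Nat.pos_of_mul_pos_right hpos)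
    (Nat.pos_of_mul_pos_left hpos)
  obtain ⟨k, hk, hk'⟩ := (he.isIntersectingArcs h𝒜.pairwiseIntersecting).exists_notMem_and_mem_succ
    hr hrm (h𝒜.card_filter_window e he)
  have hwindow (j : ℤ) : window (fun i => e (i + k)) r j = window e r (j + k) := by
    rw [window, window, add_right_comm, ← image_add_right_Ico, image_image]
    rfl
  refine ⟨_, he.comp_add k, ?_, ?_⟩
  · rwa [hwindow, zero_add]
  · rwa [hwindow, add_comm]

namespace IsPivotal

theorem window_mem (he : IsPivotal 𝒜 r e) (h𝒜 : IsTight 𝒜 r) (hrm : 2 * r < n * t) {k : ℤ}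
    (hk : 1 ≤ k) (hkr : k ≤ r) : window e r k ∈ 𝒜 := by
  have hT := he.isArrangement.isIntersectingArcs (r := r) h𝒜.pairwiseIntersecting
  simpa using hT.mem_of_notMem_of_mem_succ hrm (h𝒜.card_filter_window e he.isArrangement)
    he.window_zero_notMem he.window_one_mem hk hkr

theorem comp_two_mul_sub (he : IsPivotal 𝒜 r e) (h𝒜 : IsTight 𝒜 r) (hr : 0 < r)
    (hrm : 2 * r < n * t) : IsPivotal 𝒜 r fun i => e (2 * r - i) := by
  have hwindow (k : ℤ) : window (fun i => e (2 * r - i)) r k = window e r (r + 1 - k) := by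
    ext x
    simp only [mem_window]
    constructor <;> rintro ⟨i, hi, hi', rfl⟩ <;>
      exact ⟨2 * r - i, by lia, by lia, by simp⟩
  refine ⟨he.isArrangement.comp_sub _, ?_, ?_⟩
  · have hT := he.isArrangement.isIntersectingArcs (r := r) h𝒜.pairwiseIntersecting
    rw [hwindow, sub_zero, add_comm]
    exact hT.not_add 1 r le_rfl (by lia) he.window_one_mem
  · rw [hwindow, add_sub_cancel_right]
    exact he.window_mem h𝒜 hrm (by lia) le_rfl

theorem of_eq_comp (he : IsPivotal 𝒜 r e) (he' : IsArrangement e') {ρ : ℤ → ℤ}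
    (hρ : ∀ i ∈ Icc (0 : ℤ) r, e' i = e (ρ i)) (h0 : (Ico (0 : ℤ) r).image ρ = Ico 0 (r : ℤ))
    (h1 : (Ico (1 : ℤ) (1 + r)).image ρ = Ico (1 : ℤ) (1 + r)) : IsPivotal 𝒜 r e' := by
  have hwindow {k : ℤ} (hk : 0 ≤ k) (hk' : k ≤ 1)
      (h : (Ico k (k + r)).image ρ = Ico k (k + r)) : window e' r k = window e r k := by
    rw [window, window]
    nth_rw 2 [← h]
    rw [image_image]
    refine image_congr fun i hi => hρ i ?_
    rw [mem_coe, mem_Ico] at hi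
    exact mem_Icc.mpr (by lia)
  exact ⟨he', hwindow le_rfl zero_le_one (by simpa using h0) ▸ he.window_zero_notMem,
    hwindow zero_le_one le_rfl h1 ▸ he.window_one_mem⟩

theorem exists_comp_perm (he : IsPivotal 𝒜 r e) (hrn : r ≤ n) (ht : 2 ≤ t) {σ : Equiv.Perm ℤ}
    (hσ : ∀ i ∉ Ico (1 : ℤ) r, σ i = i) :
    ∃ e', IsPivotal 𝒜 r e' ∧ ∀ i ∈ Icc (0 : ℤ) n, e' i = e (σ i) := by
  have himage {s : Finset ℤ} (hs : Ico (1 : ℤ) r ⊆ s) : s.image σ = s := by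
    simpa [map_eq_image] using map_perm (σ := σ) (s := s)
      fun i hi => hs (not_imp_comm.mp (hσ i) hi)
  obtain ⟨e', he', heq⟩ := he.isArrangement.exists_eq_comp_perm ht fun i hi => hσ i fun hi' => by
    rw [mem_Ico] at hi'
    exact hi (mem_Ioo.mpr (by lia))
  refine ⟨e', he.of_eq_comp he' (fun i hi => heq i ?_) (himage ?_) (himage ?_), heq⟩
  · rw [mem_Icc] at hi ⊢
    lia
  · exact Ico_subset_Ico_left zero_le_one
  · exact Ico_subset_Ico_right (by simp)

theorem exists_forall_Ioo_notMem (he : IsPivotal 𝒜 r e) (hrn : r ≤ n) (ht : 2 ≤ t)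
    (hD : Set.InjOn Prod.fst (D : Set (Fin n × Fin t))) :
    ∃ e', IsPivotal 𝒜 r e' ∧ (∀ i ∈ Icc (0 : ℤ) r, e' i = e i) ∧ e' n = e n ∧
      ∀ i ∈ Ioo (r : ℤ) n, e' i ∉ D := by
  have hnt : 2 * n ≤ n * t := by nlinarith
  -- A vertex of `D` is replaced by the one `n` positions later, in the same copy.
  let ρ (i : ℤ) : ℤ := if i ∈ Ioo (r : ℤ) n ∧ e i ∈ D then i + n else i
  have hρ {i : ℤ} (hi : i ∉ Ioo (r : ℤ) n) : ρ i = i := if_neg fun h => hi h.1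
  have hρmod (i : ℤ) : ρ i ≡ i [ZMOD n] := by
    dsimp only [ρ]
    split_ifs <;> simp [Int.ModEq]
  obtain ⟨e', he', heq⟩ := he.isArrangement.exists_eq_comp_on (s := Icc 0 n) (ρ := ρ)
    (fun i _ j _ => ⟨fun h => (hρmod i).trans (h.trans (hρmod j).symm),
      fun h => (hρmod i).symm.trans (h.trans (hρmod j))⟩)
    (fun i hi j hj => by
      have := (e 0).1.pos
      rw [mem_Icc] at hi hj
      rw [modEq_iff_eq_of_abs_sub_lt (by rw [abs_lt]; lia),
        modEq_iff_eq_of_abs_sub_lt (by grind)]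
      grind)
  have heqr {i : ℤ} (hi : i ∈ Icc (0 : ℤ) r) : e' i = e i := by
    rw [mem_Icc] at hi
    rw [heq i (mem_Icc.mpr (by lia)), hρ (by rw [mem_Ioo]; lia)]
  refine ⟨e', he.of_eq_comp he' (ρ := id) (fun i => heqr) (image_id ..) (image_id ..),
    fun i => heqr, by rw [heq n (by simp), hρ (by simp)], fun i hi => ?_⟩
  rw [heq i (by rw [mem_Icc]; rw [mem_Ioo] at hi; lia)]
  by_cases hiD : e i ∈ D
  · simp only [ρ, hi, hiD, and_self, if_true]
    exact he.isArrangement.add_notMem_of_mem ht hD hiD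
  · rwa [show ρ i = i from if_neg fun h => hiD h.2]

theorem exists_mem_iff_lt (he : IsPivotal 𝒜 r e) (hr : 0 < r) (hrn : r ≤ n) (ht : 2 ≤ t)
    (hD : Set.InjOn Prod.fst (D : Set (Fin n × Fin t))) (hrD : e r ∉ D) :
    ∃ e', IsPivotal 𝒜 r e' ∧ e' n = e n ∧
      ∃ k ∈ Icc (1 : ℤ) r, ∀ i ∈ Ico (1 : ℤ) n, e' i ∈ D ↔ i < k := by
  obtain ⟨σ, k, hk, hσ, hσD⟩ := exists_perm_sorting (fun i => e i ∈ D) (a := 1) (b := r) (by lia)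
  obtain ⟨e₁, he₁, heq₁⟩ := he.exists_comp_perm hrn ht hσ
  obtain ⟨e₂, he₂, heq₂, heqn, hnotMem⟩ := he₁.exists_forall_Ioo_notMem hrn ht hD
  have hn : e₂ n = e n := by
    rw [heqn, heq₁ n (by simp), hσ n (by simp [hrn])]
  refine ⟨e₂, he₂, hn, k, hk, fun i hi => ?_⟩
  rw [mem_Icc] at hk
  rw [mem_Ico] at hi
  have hle (hir : i ≤ r) : e₂ i = e (σ i) := by
    rw [heq₂ i (mem_Icc.mpr (by lia)), heq₁ i (mem_Icc.mpr (by lia))]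
  obtain hir | rfl | hir := lt_trichotomy i r
  · rw [hle hir.le]
    exact hσD i (mem_Ico.mpr ⟨hi.1, hir⟩)
  · rw [hle le_rfl, hσ _ (by simp)]
    exact iff_of_false hrD (by lia)
  · exact iff_of_false (hnotMem i (mem_Ioo.mpr ⟨hir, hi.2⟩)) (by lia)

theorem lt_and_lt_two_mul_and_mem_of_notMem (he : IsPivotal 𝒜 r e) (h𝒜 : IsTight 𝒜 r)
    (hr : 0 < r) (hrn : r ≤ n) (ht : 2 ≤ t) (hrm : 2 * r < n * t) (hD : D ∈ 𝒜) (hrD : e r ∉ D) :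
    r < n ∧ n < 2 * r ∧ e n ∈ D := by
  have hDinj := (mem_indepSetsSize_copies_top.mp (h𝒜.subset hD)).1
  obtain ⟨e', he', heqn, k, hk, hsorted⟩ := he.exists_mem_iff_lt hr hrn ht hDinj hrD
  rw [mem_Icc] at hk
  by_contra hcon
  have hn : n < k + r → e' n ∉ D := by
    intro hnk hnD
    rw [heqn] at hnD
    obtain rfl | hlt := hrn.eq_or_lt
    · exact hrD hnD
    · exact hcon ⟨hlt, by lia, hnD⟩
  refine pairwiseIntersecting_iff_not_disjoint.mp h𝒜.pairwiseIntersecting _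
    (he'.window_mem h𝒜 hrm hk.1 hk.2) D hD ?_
  exact he'.isArrangement.disjoint_window_of_sorted ht hDinj hrn hk.1 (by lia) hsorted hn

-- Reflecting the ordering about the pivot brings position `2 * r - n` to position `n`, so every
-- vertex in front of the pivot, once moved to position `2 * r - n`, is seen to lie in `D`.
theorem eq_insert_of_notMem (he : IsPivotal 𝒜 r e) (h𝒜 : IsTight 𝒜 r) (hr : 0 < r) (hrn : r ≤ n)
    (ht : 2 ≤ t) (hrm : 2 * r < n * t) (hD : D ∈ 𝒜) (hrD : e r ∉ D) :
    D = insert (e n) ((Ico (1 : ℤ) r).image e) := by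
  obtain ⟨hlt, hn2r, hnD⟩ := he.lt_and_lt_two_mul_and_mem_of_notMem h𝒜 hr hrn ht hrm hD hrD
  have hmem {x : ℤ} (hx : x ∈ Ico (1 : ℤ) r) : e x ∈ D := by
    rw [mem_Ico] at hx
    obtain ⟨e', he', heq⟩ := he.exists_comp_perm hrn ht (σ := Equiv.swap x (2 * r - n))
      fun i hi => by
        rw [mem_Ico] at hi
        exact Equiv.swap_apply_of_ne_of_ne (by lia) (by lia)
    have hr' : e' r = e r := by
      rw [heq r (by simp [hrn]), Equiv.swap_apply_of_ne_of_ne (by lia) (by lia)]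
    obtain ⟨-, -, hx'⟩ :=
      (he'.comp_two_mul_sub h𝒜 hr hrm).lt_and_lt_two_mul_and_mem_of_notMem h𝒜 hr hrn ht hrm hD
        (by simpa [two_mul, hr'] using hrD)
    rwa [heq _ (mem_Icc.mpr (by lia)), Equiv.swap_apply_right] at hx'
  refine (eq_of_subset_of_card_le (insert_subset hnD ?_) ?_).symm
  · exact image_subset_iff.mpr fun x hx => hmem hx
  · have hinj : Set.InjOn e (insert (n : ℤ) (Ico (1 : ℤ) r) : Finset ℤ) :=
      ((he.isArrangement.injOn_fst 1).mono fun i hi => by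
        simp only [mem_coe, mem_insert, mem_Ico] at hi
        rw [Set.mem_Ico]
        lia).of_comp (f := e) (g := Prod.fst)
    rw [← image_insert, card_image_of_injOn hinj, card_insert_of_notMem (by rw [mem_Ico]; lia)]
    rw [(mem_indepSetsSize_copies_top.mp (h𝒜.subset hD)).2, Int.card_Ico]
    lia

theorem apply_mem_of_mem (he : IsPivotal 𝒜 r e) (h𝒜 : IsTight 𝒜 r) (hr : 0 < r) (hrn : r ≤ n)
    (ht : 2 ≤ t) (hrm : 2 * r < n * t) (hcard : #(ekrStar K r (e r)) ≤ #𝒜) :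
    ∀ A ∈ 𝒜, e r ∈ A := by
  by_contra! hmiss
  obtain ⟨D, hD, hrD⟩ := hmiss
  obtain ⟨hlt, hn2r, -⟩ := he.lt_and_lt_two_mul_and_mem_of_notMem h𝒜 hr hrn ht hrm hD hrD
  have hD_eq := he.eq_insert_of_notMem h𝒜 hr hrn ht hrm hD hrD
  have hunique (A : Finset (Fin n × Fin t)) (hA : A ∈ 𝒜) (hAD : A ≠ D) : e r ∈ A := by
    by_contra hrA
    exact hAD ((he.eq_insert_of_notMem h𝒜 hr hrn ht hrm hA hrA).trans hD_eq.symm)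
  have hpart : (e r).1 ∉ D.image Prod.fst := by
    rw [hD_eq, ← image_insert, image_image, mem_image]
    rintro ⟨i, hi, hir⟩
    rw [mem_insert, mem_Ico] at hi
    have := he.isArrangement.injOn_fst 1 (by rw [Set.mem_Ico]; lia) (by rw [Set.mem_Ico]; lia) hir
    lia
  have : Nontrivial (Fin t) := Fin.nontrivial_iff_two_le.mpr ht
  exact hcard.not_gt (card_lt_card_ekrStar_of_forall_ne_mem h𝒜.subset h𝒜.pairwiseIntersecting hD
    hpart (by lia) hunique)

end IsPivotal

theorem IsTight.exists_eq_ekrStar (h𝒜 : IsTight 𝒜 r) (hr : 0 < r) (hrn : r ≤ n)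
    (ht : 2 ≤ t) (hrm : 2 * r < n * t) (hcard : ∀ v, #(ekrStar K r v) ≤ #𝒜) :
    ∃ v, 𝒜 = ekrStar K r v := by
  obtain ⟨e, he⟩ := h𝒜.exists_isPivotal hr hrm.le
  refine ⟨e r, eq_of_subset_of_card_le (fun A hA => mem_ekrStar.mpr ⟨h𝒜.subset hA, ?_⟩) (hcard _)⟩
  exact he.apply_mem_of_mem h𝒜 hr hrn ht hrm (hcard _) A hA

end Pivot

/-- Meyer; Deza–Frankl. The disjoint union of `n` copies of the
complete graph `K_t` (with `n ≥ r ≥ 1`, `t ≥ 2`) is `r`-EKR, and strictly `r`-EKR unless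
`r = n` and `t = 2`. -/
theorem unionCompleteGraphs_EKR (n r t : ℕ) (hn : 0 < n) (hr : 0 < r) (ht : 2 ≤ t)
    (hrn : r ≤ n) :
    IsEKR (copies n (⊤ : SimpleGraph (Fin t))) r ∧
    (¬(r = n ∧ t = 2) → IsStrictEKR (copies n (⊤ : SimpleGraph (Fin t))) r) := by
  have hnt : n * 2 ≤ n * t := by gcongr
  have hEKR : IsEKR (copies n (⊤ : SimpleGraph (Fin t))) r := fun 𝒜 h𝒜K h𝒜 =>
    ⟨(⟨0, hn⟩, ⟨0, by lia⟩), card_le_card_ekrStar h𝒜K h𝒜 hrn (by lia) _⟩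
  refine ⟨hEKR, fun hne => ⟨hEKR, fun 𝒜 h𝒜K h𝒜 hmax => ?_⟩⟩
  have hrm : 2 * r < n * t := by
    obtain hlt | rfl := hrn.lt_or_eq
    · lia
    · have : 2 < t := by lia
      nlinarith
  have hcard (v : Fin n × Fin t) : #(ekrStar (copies n ⊤) r v) ≤ #𝒜 :=
    hmax _ ekrStar_subset pairwiseIntersecting_ekrStar
  have htight : IsTight 𝒜 r :=
    ⟨h𝒜K, h𝒜, fun e he => he.card_filter_window_eq h𝒜K h𝒜 hrn hrm.le (hcard (e 0))⟩
  exact htight.exists_eq_ekrStar hr hrn ht hrm hcard
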